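/- arXiv:1907.07513 — 4 statements merged into one kernel-verified Lean document; each statement's English description precedes it below -/
import Mathlib

section
/- For every intolerance parameter τ with 1/2 < τ < 1, there exist a finite simple graph G = (V,E), a set A of agents with |A| = |V| partitioned into exactly 2 types, and a bijective placement p₀ : A → V such that no finite sequence of improving swaps of the swap Schelling game with parameter τ starting from p₀ ends in a swap-stable placement; in particular, the swap Schelling game with two types and τ > 1/2 is not weakly acyclic and admits an improving response cycle. -/
open Finset
open scoped Classical

noncomputable section

namespace Schelling

variable {V A : Type*} [Fintype V] [Fintype A] {k : ℕ}

/-- The set of neighbors of agent `a` under placement `p`. -/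
def nbrs (G : SimpleGraph V) (p : A → V) (a : A) : Finset A :=
  Finset.univ.filter fun b => G.Adj (p a) (p b)

/-- `|N⁺_p(a)|`: the number of neighbors of `a` under `p` having the same type as `a`. -/
def posCount (G : SimpleGraph V) (t : A → Fin k) (p : A → V) (a : A) : ℕ :=
  (Finset.univ.filter fun b => G.Adj (p a) (p b) ∧ t b = t a).card

/-- One-versus-all `|N⁻_p(a)|`: the number of neighbors of `a` whose type differs from `t a`. -/
def negCountAll (G : SimpleGraph V) (t : A → Fin k) (p : A → V) (a : A) : ℕ :=
  (Finset.univ.filter fun b => G.Adj (p a) (p b) ∧ t b ≠ t a).card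

/-- One-versus-one `|N⁻_p(a)|`: the size of a largest set of neighbors of `a`
of one common type different from `t a`. -/
def negCountOne (G : SimpleGraph V) (t : A → Fin k) (p : A → V) (a : A) : ℕ :=
  (Finset.univ.filter fun T : Fin k => T ≠ t a).sup fun T =>
    (Finset.univ.filter fun b => G.Adj (p a) (p b) ∧ t b = T).card

/-- The cost of agent `a` in the one-versus-all version. -/
def costAll (G : SimpleGraph V) (t : A → Fin k) (τ : ℝ) (p : A → V) (a : A) : ℝ :=
  if nbrs G p a = ∅ then τ
  else max 0 (τ - (posCount G t p a : ℝ) /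
    ((posCount G t p a : ℝ) + (negCountAll G t p a : ℝ)))

/-- The cost of agent `a` in the one-versus-one version. -/
def costOne (G : SimpleGraph V) (t : A → Fin k) (τ : ℝ) (p : A → V) (a : A) : ℝ :=
  if nbrs G p a = ∅ then τ
  else max 0 (τ - (posCount G t p a : ℝ) /
    ((posCount G t p a : ℝ) + (negCountOne G t p a : ℝ)))

/-- A swap of the (distinct) agents `a` and `b` turning placement `p` into `q`,
which strictly decreases the cost of both agents (cost function `c`). -/
def SwapMove (c : (A → V) → A → ℝ) (p q : A → V) (a b : A) : Prop :=
  a ≠ b ∧ q = p ∘ (Equiv.swap a b) ∧ c q a < c p a ∧ c q b < c p b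

/-- `q` is obtained from `p` by an improving swap. -/
def ImprovingSwap (c : (A → V) → A → ℝ) (p q : A → V) : Prop :=
  ∃ a b, SwapMove c p q a b

/-- A placement is swap-stable if it admits no improving swap. -/
def SwapStable (c : (A → V) → A → ℝ) (p : A → V) : Prop :=
  ∀ q, ¬ ImprovingSwap c p q

/-- Some finite sequence of improving swaps starting at `p₀` ends in a swap-stable placement. -/
def ReachesStableSwap (c : (A → V) → A → ℝ) (p₀ : A → V) : Prop :=
  ∃ (n : ℕ) (q : ℕ → A → V), q 0 = p₀ ∧
    (∀ i < n, ImprovingSwap c (q i) (q (i + 1))) ∧ SwapStable c (q n)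

/-- A jump of agent `a` to the node `v` (unoccupied under `p`) turning placement `p`
into `q`, which strictly decreases the cost of `a` (cost function `c`). -/
def JumpMove (c : (A → V) → A → ℝ) (p q : A → V) (a : A) (v : V) : Prop :=
  (∀ b, p b ≠ v) ∧ q = Function.update p a v ∧ c q a < c p a

/-- `q` is obtained from `p` by an improving jump. -/
def ImprovingJump (c : (A → V) → A → ℝ) (p q : A → V) : Prop :=
  ∃ a v, JumpMove c p q a v

/-- A placement is jump-stable if it admits no improving jump. -/
def JumpStable (c : (A → V) → A → ℝ) (p : A → V) : Prop :=
  ∀ q, ¬ ImprovingJump c p q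

/-- Some finite sequence of improving jumps starting at `p₀` ends in a jump-stable placement. -/
def ReachesStableJump (c : (A → V) → A → ℝ) (p₀ : A → V) : Prop :=
  ∃ (n : ℕ) (q : ℕ → A → V), q 0 = p₀ ∧
    (∀ i < n, ImprovingJump c (q i) (q (i + 1))) ∧ JumpStable c (q n)

/-- The placement cost: the number of discontent agents (one-versus-all cost). -/
def placementCost (G : SimpleGraph V) (t : A → Fin k) (τ : ℝ) (p : A → V) : ℕ :=
  (Finset.univ.filter fun a => costAll G t τ p a ≠ 0).card

/-- A graph is `Δ`-regular if every node has exactly `Δ` neighbors. -/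
def IsRegular (G : SimpleGraph V) (Δ : ℕ) : Prop :=
  ∀ v : V, (Finset.univ.filter fun u => G.Adj v u).card = Δ


/-- node-level cost of the agent at `v` under the coloring `c` -/
def nodeCost {W : Type*} [Fintype W] (adj : W → W → Prop) (τ : ℝ) (c : W → Fin 2) (v : W) : ℝ :=
  max 0 (τ - ((∑ u, if adj v u ∧ c u = c v then 1 else 0 : ℕ) : ℝ) /
    (((∑ u, if adj v u ∧ c u = c v then 1 else 0 : ℕ) : ℝ) +
      ((∑ u, if adj v u ∧ c u ≠ c v then 1 else 0 : ℕ) : ℝ)))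

theorem costAll_eq_nodeCost {A V W : Type*} [Fintype A] [Fintype V] [Fintype W]
    (G : SimpleGraph W) (e : W ≃ V) (P : A ≃ W) (t : A → Fin 2) (τ : ℝ) (hτ : 0 < τ) (a : A) :
    costAll (G.comap e.symm) t τ (e ∘ P) a = nodeCost G.Adj τ (t ∘ P.symm) (P a) := by
  have hp : posCount (G.comap e.symm) t (e ∘ P) a =
      ∑ u, if G.Adj (P a) u ∧ (t ∘ P.symm) u = (t ∘ P.symm) (P a) then 1 else 0 := by
    rw [posCount, Finset.card_filter, ← Equiv.sum_comp P]
    simp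
  have hn : negCountAll (G.comap e.symm) t (e ∘ P) a =
      ∑ u, if G.Adj (P a) u ∧ (t ∘ P.symm) u ≠ (t ∘ P.symm) (P a) then 1 else 0 := by
    rw [negCountAll, Finset.card_filter, ← Equiv.sum_comp P]
    simp
  unfold costAll nodeCost
  rw [← hp, ← hn]
  split_ifs with h
  · have : posCount (G.comap e.symm) t (e ∘ P) a = 0 := by
      rw [posCount, Finset.card_eq_zero]
      rw [nbrs] at h
      ext b
      have := Finset.ext_iff.1 h b
      simp at this ⊢
      intro h'
      exact absurd h' this
    rw [this]
    simp [hτ.le]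
  · rfl

theorem swap_aux {A W : Type*} (P : A ≃ W) (t : A → Fin 2) (a b : A) (w : W) :
    (t ∘ ((Equiv.swap a b).trans P).symm) w =
      ((t ∘ P.symm) ∘ Equiv.swap (P a) (P b)) w := by
  obtain ⟨x, rfl⟩ := P.surjective w
  have := P.injective.swap_apply a b x
  simp [this]

/-- an improving swap of colors at the nodes `u`, `v` -/
def CMove {W : Type*} (F : (W → Fin 2) → W → ℝ) (c : W → Fin 2) (u v : W) : Prop :=
  u ≠ v ∧ F (c ∘ Equiv.swap u v) v < F c u ∧ F (c ∘ Equiv.swap u v) u < F c v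

theorem swapMove_iff {A V W : Type*} [Fintype A] [Fintype V] [Fintype W]
    (G : SimpleGraph W) (e : W ≃ V) (P : A ≃ W) (t : A → Fin 2) (τ : ℝ) (hτ : 0 < τ) (a b : A)
    (q : A → V) :
    SwapMove (costAll (G.comap e.symm) t τ) (e ∘ P) q a b ↔
      q = e ∘ ((Equiv.swap a b).trans P) ∧
        CMove (nodeCost G.Adj τ) (t ∘ P.symm) (P a) (P b) := by
  have hc : t ∘ ((Equiv.swap a b).trans P).symm =
      (t ∘ P.symm) ∘ Equiv.swap (P a) (P b) := by
    funext w
    exact swap_aux P t a b w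
  unfold SwapMove CMove
  have hq : (e ∘ P) ∘ Equiv.swap a b = e ∘ ((Equiv.swap a b).trans P) := rfl
  rw [hq]
  have key : ∀ x, costAll (G.comap e.symm) t τ (e ∘ ((Equiv.swap a b).trans P)) x =
    nodeCost G.Adj τ ((t ∘ P.symm) ∘ Equiv.swap (P a) (P b)) (P (Equiv.swap a b x)) := by
    intro x
    rw [costAll_eq_nodeCost G e _ t τ hτ x, hc]
    rfl
  constructor
  · rintro ⟨h1, rfl, h2, h3⟩
    rw [key, costAll_eq_nodeCost G e P t τ hτ] at h2 h3
    refine ⟨rfl, fun h => h1 (P.injective h), ?_, ?_⟩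
    · simpa using h2
    · simpa using h3
  · rintro ⟨rfl, h1, h2, h3⟩
    rw [key, costAll_eq_nodeCost G e P t τ hτ, key, costAll_eq_nodeCost G e P t τ hτ]
    refine ⟨fun h => h1 (by rw [h]), rfl, ?_, ?_⟩
    · simpa using h2
    · simpa using h3

theorem main_of_colorings {W : Type*} [Fintype W] (G : SimpleGraph W) (τ : ℝ) (hτ : 0 < τ)
    (Good : (W → Fin 2) → Prop) (c₀ : W → Fin 2) (hs : Function.Surjective c₀) (h₀ : Good c₀)
    (hclosed : ∀ c, Good c → ∀ u v, CMove (nodeCost G.Adj τ) c u v → Good (c ∘ Equiv.swap u v))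
    (hmove : ∀ c, Good c → ∃ u v, CMove (nodeCost G.Adj τ) c u v) :
    ∃ (N : ℕ) (G : SimpleGraph (Fin N)) (t : Fin N → Fin 2) (p₀ : Fin N → Fin N),
      Function.Surjective t ∧ Function.Bijective p₀ ∧
      (¬ ReachesStableSwap (costAll G t τ) p₀) ∧
      (∃ (ℓ : ℕ) (q : ℕ → Fin N → Fin N), 1 ≤ ℓ ∧ Function.Bijective (q 0) ∧ q ℓ = q 0 ∧
        ∀ i < ℓ, ImprovingSwap (costAll G t τ) (q i) (q (i + 1))) := by
  let N := Fintype.card W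
  let e : W ≃ Fin N := Fintype.equivFin W
  let t : Fin N → Fin 2 := c₀ ∘ e.symm
  let H := G.comap e.symm
  let S : (Fin N → Fin N) → Prop := fun p => ∃ P : Fin N ≃ W, p = e ∘ P ∧ Good (t ∘ P.symm)
  have hc : ∀ (P : Fin N ≃ W) (a b : Fin N), t ∘ ((Equiv.swap a b).trans P).symm =
      (t ∘ P.symm) ∘ Equiv.swap (P a) (P b) := by
    intro P a b
    funext w
    convert swap_aux P t a b w
  have S0 : S id := ⟨e.symm, by funext x; simp, by
    have : t ∘ e.symm.symm = c₀ := by funext x; simp [t]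
    rw [this]; exact h₀⟩
  have Sclosed : ∀ p q, S p → ImprovingSwap (costAll H t τ) p q → S q := by
    rintro p q ⟨P, rfl, hP⟩ ⟨a, b, hm⟩
    obtain ⟨rfl, hm'⟩ := (swapMove_iff G e P t τ hτ a b q).1 hm
    have := hclosed _ hP _ _ hm'
    refine ⟨_, rfl, ?_⟩
    convert this using 1
    convert hc P a b
  have Smove : ∀ p, S p → ∃ q, ImprovingSwap (costAll H t τ) p q := by
    rintro p ⟨P, rfl, hP⟩
    obtain ⟨u, v, hm⟩ := hmove _ hP
    refine ⟨_, P.symm u, P.symm v, (swapMove_iff G e P t τ hτ _ _ _).2 ⟨rfl, ?_⟩⟩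
    simpa using hm
  have Sbij : ∀ p, S p → Function.Bijective p := by
    rintro p ⟨P, rfl, -⟩
    exact e.bijective.comp P.bijective
  refine ⟨N, H, t, id, hs.comp e.symm.surjective, Function.bijective_id, ?_, ?_⟩
  · rintro ⟨n, q, hq0, hq, hst⟩
    have : ∀ i ≤ n, S (q i) := by
      intro i
      induction i with
      | zero => intro _; rw [hq0]; exact S0
      | succ i ih => intro hi; exact Sclosed _ _ (ih (by omega)) (hq i (by omega))
    obtain ⟨q', hq'⟩ := Smove _ (this n le_rfl)
    exact hst q' hq'
  · choose! f hf using Smove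
    have hS : ∀ i, S (f^[i] id) := by
      intro i
      induction i with
      | zero => exact S0
      | succ i ih =>
        rw [Function.iterate_succ_apply']
        exact Sclosed _ _ ih (hf _ ih)
    obtain ⟨i, j, hij, heq⟩ := Finite.exists_ne_map_eq_of_infinite (fun i : ℕ => f^[i] id)
    have main : ∀ i j : ℕ, i < j → f^[i] id = f^[j] id →
        ∃ (ℓ : ℕ) (q : ℕ → Fin N → Fin N), 1 ≤ ℓ ∧ Function.Bijective (q 0) ∧ q ℓ = q 0 ∧
        ∀ i < ℓ, ImprovingSwap (costAll H t τ) (q i) (q (i + 1)) := by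
      intro i j hij heq
      refine ⟨j - i, fun l => f^[i + l] id, by omega, Sbij _ (hS _), ?_, ?_⟩
      · show f^[i + (j - i)] id = f^[i + 0] id
        rw [show i + (j - i) = j by omega]
        exact heq.symm
      · intro l _
        show ImprovingSwap _ (f^[i + l] id) (f^[i + l + 1] id)
        rw [Function.iterate_succ_apply']
        exact hf _ (hS _)
    rcases lt_or_gt_of_ne hij with h | h
    · exact main i j h heq
    · exact main j i h heq.symm

/-- number of fixed neighbors of color `x` of an active node -/
def fixedNbrs (n : ℕ) : Fin 2 → Fin 4 → ℕ :=
  ![![n, n + 2, n + 2, n + 1], ![n, n + 2, n + 1, n + 2]]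

/-- adjacency of the construction: four active nodes, two monochromatic cliques -/
def gAdj (n M : ℕ) : Fin 4 ⊕ (Fin M ⊕ Fin M) → Fin 4 ⊕ (Fin M ⊕ Fin M) → Prop
  | .inl i, .inl j => (i = 0 ∧ j = 1) ∨ (i = 1 ∧ j = 0)
  | .inl i, .inr (.inl r) => r.val < fixedNbrs n 0 i
  | .inl i, .inr (.inr r) => r.val < fixedNbrs n 1 i
  | .inr (.inl r), .inl i => r.val < fixedNbrs n 0 i
  | .inr (.inr r), .inl i => r.val < fixedNbrs n 1 i
  | .inr (.inl r), .inr (.inl s) => r ≠ s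
  | .inr (.inr r), .inr (.inr s) => r ≠ s
  | .inr (.inl _), .inr (.inr _) => False
  | .inr (.inr _), .inr (.inl _) => False

def gGraph (n M : ℕ) : SimpleGraph (Fin 4 ⊕ (Fin M ⊕ Fin M)) where
  Adj := gAdj n M
  symm := ⟨by
    rintro (i | r | r) (j | s | s) h <;> simp only [gAdj] at h ⊢ <;> tauto⟩
  loopless := ⟨by
    rintro (i | r | r) h <;> simp only [gAdj] at h
    · omega
    · exact h rfl
    · exact h rfl⟩

/-- coloring extending a coloring of the active nodes -/
def ext (M : ℕ) (s : Fin 4 → Fin 2) : Fin 4 ⊕ (Fin M ⊕ Fin M) → Fin 2 :=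
  Sum.elim s (Sum.elim (fun _ => 0) (fun _ => 1))

def rk (s : Fin 4 → Fin 2) : Fin 4 → ℕ :=
  ![if s 0 = s 1 then 5 else 0, if s 0 = s 1 then 3 else 2,
    if s 2 = 0 then 4 else 1, if s 3 = 0 then 1 else 4]

def good (s : Fin 4 → Fin 2) : Prop :=
  s = ![1, 0, 0, 1] ∨ s = ![0, 0, 1, 1] ∨ s = ![0, 1, 0, 1] ∨ s = ![1, 1, 0, 0]

instance (s : Fin 4 → Fin 2) : Decidable (good s) := by unfold good; infer_instance

theorem good_closed : ∀ s, good s → ∀ i j : Fin 4, i ≠ j →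
    rk s i < rk (s ∘ Equiv.swap i j) j → rk s j < rk (s ∘ Equiv.swap i j) i →
    good (s ∘ Equiv.swap i j) := by
  decide

theorem good_move : ∀ s, good s → ∃ i j : Fin 4, i ≠ j ∧
    rk s i < rk (s ∘ Equiv.swap i j) j ∧ rk s j < rk (s ∘ Equiv.swap i j) i := by
  decide

def val (n : ℕ) : ℕ → ℝ
  | 0 => n / (2 * n + 1)
  | 1 => (n + 1) / (2 * n + 3)
  | 2 => (n + 2) / (2 * n + 5)
  | 3 => (n + 3) / (2 * n + 5)
  | 4 => (n + 2) / (2 * n + 3)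
  | _ => (n + 1) / (2 * n + 1)

theorem val_lt (n : ℕ) : val n 0 < val n 1 ∧ val n 1 < val n 2 ∧ val n 2 < val n 3 ∧
    val n 3 < val n 4 ∧ val n 4 < val n 5 := by
  have hn : (0 : ℝ) ≤ n := Nat.cast_nonneg n
  simp only [val]
  refine ⟨?_, ?_, ?_, ?_, ?_⟩ <;> rw [div_lt_div_iff₀ (by positivity) (by positivity)] <;>
    nlinarith

theorem rk_le (s : Fin 4 → Fin 2) (i : Fin 4) : rk s i ≤ 5 := by
  revert s i; decide

theorem val_lt_iff (n : ℕ) {x y : ℕ} (hx : x ≤ 5) (hy : y ≤ 5) : val n x < val n y ↔ x < y := by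
  obtain ⟨h1, h2, h3, h4, h5⟩ := val_lt n
  interval_cases x <;> interval_cases y <;> simp <;> linarith

theorem sum_lt (M k : ℕ) (h : k ≤ M) : (∑ r : Fin M, if r.val < k then 1 else 0) = k := by
  rw [← Finset.card_filter]
  simp [Fin.card_filter_val_lt, h]

theorem fixedNbrs_le (n : ℕ) (x : Fin 2) (i : Fin 4) : fixedNbrs n x i ≤ n + 2 := by
  fin_cases x <;> fin_cases i <;> simp [fixedNbrs]

theorem gAdj_cnt (n M : ℕ) (hM : n + 2 ≤ M) (s : Fin 4 → Fin 2) (i : Fin 4) :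
    ((∑ u, if (gGraph n M).Adj (.inl i) u ∧ ext M s u = ext M s (.inl i) then 1 else 0 : ℕ) : ℝ) /
    (((∑ u, if (gGraph n M).Adj (.inl i) u ∧ ext M s u = ext M s (.inl i) then 1 else 0 : ℕ) : ℝ) +
    ((∑ u, if (gGraph n M).Adj (.inl i) u ∧ ext M s u ≠ ext M s (.inl i) then 1 else 0 : ℕ) : ℝ))
      = val n (rk s i) := by
  have e0 := sum_lt M _ ((fixedNbrs_le n 0 i).trans hM)
  have e1 := sum_lt M _ ((fixedNbrs_le n 1 i).trans hM)
  have key : ∀ x : Fin 2, x = 0 ∨ x = 1 := by decide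
  have hx := key (s 0)
  have hy := key (s 1)
  have hz := key (s 2)
  have hw := key (s 3)
  simp only [gGraph, Fintype.sum_sum_type, Fin.sum_univ_four, gAdj, ext, Sum.elim_inl, Sum.elim_inr]
  fin_cases i
  · rcases hx with hx | hx <;> rcases hy with hy | hy <;>
      simp [hx, hy, rk, e0, e1, fixedNbrs] at e0 e1 ⊢ <;> simp [val, e0, e1] <;> congr 1 <;> ring
  · rcases hx with hx | hx <;> rcases hy with hy | hy <;>
      simp [hx, hy, rk, e0, e1, fixedNbrs] at e0 e1 ⊢ <;> simp [val, e0, e1] <;> congr 1 <;> ring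
  · rcases hz with hz | hz <;>
      simp [hz, rk, e0, e1, fixedNbrs] at e0 e1 ⊢ <;> simp [val, e0, e1] <;> congr 1 <;> ring
  · rcases hw with hw | hw <;>
      simp [hw, rk, e0, e1, fixedNbrs] at e0 e1 ⊢ <;> simp [val, e0, e1] <;> congr 1 <;> ring

theorem nodeCost_active (n M : ℕ) (hM : n + 2 ≤ M) (τ : ℝ)
    (hn : val n 5 < τ) (s : Fin 4 → Fin 2) (i : Fin 4) :
    nodeCost (gGraph n M).Adj τ (ext M s) (.inl i) = τ - val n (rk s i) := by
  have hv : val n (rk s i) < τ := by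
    refine lt_of_le_of_lt ?_ hn
    rcases (rk_le s i).lt_or_eq with h | h
    · exact ((val_lt_iff n (rk_le s i) le_rfl).2 h).le
    · rw [h]
  rw [nodeCost, gAdj_cnt n M hM, max_eq_right (by linarith)]

theorem sum_le_four (P : Fin 4 → Prop) [DecidablePred P] : (∑ i, if P i then 1 else 0) ≤ 4 := by
  rw [← Finset.card_filter]
  exact (Finset.card_le_univ _).trans (by simp)

theorem sum_ne (M : ℕ) (r : Fin M) : (∑ x : Fin M, if r ≠ x then 1 else 0) = M - 1 := by
  rw [← Finset.card_filter, Finset.filter_ne]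
  simp

theorem nodeCost_fixed (n M : ℕ) (τ : ℝ) (h1 : 0 < τ) (hτ : τ < 1) (hM : 4 * τ ≤ (M - 1) * (1 - τ))
    (hM1 : 1 < M) (s : Fin 4 → Fin 2) (r : Fin M ⊕ Fin M) :
    nodeCost (gGraph n M).Adj τ (ext M s) (.inr r) = 0 := by
  have key : ∀ p q : ℕ, M - 1 ≤ p → q ≤ 4 → max 0 (τ - (p : ℝ) / ((p : ℝ) + (q : ℝ))) = 0 := by
    intro p q hp hq
    have hp' : (M : ℝ) - 1 ≤ p := by
      have : M ≤ p + 1 := by omega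
      have : (M : ℝ) ≤ p + 1 := by exact_mod_cast this
      linarith
    have hq' : (q : ℝ) ≤ 4 := by exact_mod_cast hq
    have hpp : (0 : ℝ) < p := by
      have : 0 < p := by omega
      exact_mod_cast this
    have hq0 : (0 : ℝ) ≤ q := Nat.cast_nonneg q
    apply max_eq_left
    rw [sub_nonpos, le_div_iff₀ (by positivity)]
    nlinarith
  rw [nodeCost]
  apply key
  · rcases r with r | r
    · have := sum_ne M r
      simp only [gGraph, Fintype.sum_sum_type, gAdj, ext, Sum.elim_inl, Sum.elim_inr, and_true]
      rw [this]
      omega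
    · have := sum_ne M r
      simp only [gGraph, Fintype.sum_sum_type, gAdj, ext, Sum.elim_inl, Sum.elim_inr, and_true]
      rw [this]
      omega
  · rcases r with r | r
    · simp only [gGraph, Fintype.sum_sum_type, gAdj, ext, Sum.elim_inl, Sum.elim_inr]
      simp only [ne_eq, not_true_eq_false, and_false, false_and, if_false, Finset.sum_const_zero, add_zero, zero_add]
      exact @sum_le_four (fun x => r.val < fixedNbrs n 0 x ∧ ¬ s x = 0) (_)
    · simp only [gGraph, Fintype.sum_sum_type, gAdj, ext, Sum.elim_inl, Sum.elim_inr]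
      simp only [ne_eq, not_true_eq_false, and_false, false_and, if_false, Finset.sum_const_zero, add_zero, zero_add]
      exact @sum_le_four (fun x => r.val < fixedNbrs n 1 x ∧ ¬ s x = 1) (_)

theorem ext_swap (M : ℕ) (s : Fin 4 → Fin 2) (i j : Fin 4) :
    ext M s ∘ Equiv.swap (.inl i) (.inl j) = ext M (s ∘ Equiv.swap i j) := by
  funext w
  rcases w with w | w
  · have h : Function.Injective (Sum.inl : Fin 4 → Fin 4 ⊕ (Fin M ⊕ Fin M)) := Sum.inl_injective
    have := h.swap_apply i j w
    simp only [Function.comp]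
    rw [this]
    simp [ext]
  · simp only [Function.comp]
    rw [Equiv.swap_apply_of_ne_of_ne (by simp) (by simp)]
    simp [ext]

theorem nodeCost_nonneg {W : Type*} [Fintype W] (adj : W → W → Prop) (τ : ℝ) (c : W → Fin 2)
    (v : W) : 0 ≤ nodeCost adj τ c v := le_max_left _ _

/-- For every `1/2 < τ < 1` there are a graph, two surjectively used agent types on
`|A| = |V|` agents and a bijective placement `p₀` from which no finite sequence of
improving swaps of the SSG reaches a swap-stable placement (so the two-type SSG is not
weakly acyclic); moreover an improving response cycle exists. -/
theorem statement0 (τ : ℝ) (hτ1 : 1 / 2 < τ) (hτ2 : τ < 1) :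
    ∃ (N : ℕ) (G : SimpleGraph (Fin N)) (t : Fin N → Fin 2) (p₀ : Fin N → Fin N),
      Function.Surjective t ∧ Function.Bijective p₀ ∧
      (¬ ReachesStableSwap (costAll G t τ) p₀) ∧
      (∃ (ℓ : ℕ) (q : ℕ → Fin N → Fin N), 1 ≤ ℓ ∧ Function.Bijective (q 0) ∧ q ℓ = q 0 ∧
        ∀ i < ℓ, ImprovingSwap (costAll G t τ) (q i) (q (i + 1))) := by
  obtain ⟨n, hn⟩ : ∃ n : ℕ, val n 5 < τ := by
    obtain ⟨n, hn⟩ := exists_nat_gt ((1 - τ) / (2 * τ - 1))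
    refine ⟨n, ?_⟩
    have h : (0 : ℝ) ≤ n := Nat.cast_nonneg n
    rw [div_lt_iff₀ (by linarith)] at hn
    simp only [val]
    rw [div_lt_iff₀ (by positivity)]
    nlinarith
  obtain ⟨M, hM1, hM⟩ : ∃ M : ℕ, n + 2 ≤ M ∧ 4 * τ ≤ (M - 1) * (1 - τ) := by
    obtain ⟨m, hm⟩ := exists_nat_gt (4 * τ / (1 - τ))
    refine ⟨m + n + 2, by omega, ?_⟩
    have h : (0 : ℝ) ≤ n := Nat.cast_nonneg n
    rw [div_lt_iff₀ (by linarith)] at hm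
    push_cast
    nlinarith
  have hτ : 0 < τ := by linarith
  have hact := nodeCost_active n M hM1 τ hn
  have hfix := nodeCost_fixed n M τ hτ hτ2 hM (by omega)
  have hcm : ∀ (s : Fin 4 → Fin 2) (i j : Fin 4),
      CMove (nodeCost (gGraph n M).Adj τ) (ext M s) (.inl i) (.inl j) ↔ i ≠ j ∧
        rk s i < rk (s ∘ Equiv.swap i j) j ∧ rk s j < rk (s ∘ Equiv.swap i j) i := by
    intro s i j
    have hsw : ext M s ∘ (@Equiv.swap _ (fun a b => Classical.propDecidable (a = b))
        (Sum.inl i) (Sum.inl j)) = ext M (s ∘ Equiv.swap i j) := by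
      rw [← ext_swap]
      congr!
    unfold CMove
    rw [hsw, hact, hact, hact, hact, sub_lt_sub_iff_left, sub_lt_sub_iff_left,
      val_lt_iff n (rk_le _ _) (rk_le _ _), val_lt_iff n (rk_le _ _) (rk_le _ _)]
    simp
  refine main_of_colorings (gGraph n M) τ hτ (fun c => ∃ s, good s ∧ c = ext M s)
    (ext M ![1, 0, 0, 1]) ?_ ⟨_, Or.inl rfl, rfl⟩ ?_ ?_
  · intro x
    fin_cases x
    · exact ⟨.inl 1, rfl⟩
    · exact ⟨.inl 0, rfl⟩
  · rintro c ⟨s, hs, rfl⟩ u v hm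
    rcases u with i | r
    · rcases v with j | r
      · obtain ⟨h1, h2, h3⟩ := (hcm s i j).1 hm
        refine ⟨_, good_closed s hs i j h1 h2 h3, ?_⟩
        rw [← ext_swap]
        congr!
      · have := hm.2.2
        rw [hfix] at this
        exact absurd this (not_lt.2 (nodeCost_nonneg _ _ _ _))
    · have := hm.2.1
      rw [hfix] at this
      exact absurd this (not_lt.2 (nodeCost_nonneg _ _ _ _))
  · rintro c ⟨s, hs, rfl⟩
    obtain ⟨i, j, h⟩ := good_move s hs
    exact ⟨_, _, (hcm s i j).2 h⟩

end Schelling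
end
end

section
/- For every number of types k ≥ 3 and every intolerance parameter τ ∈ (0,1), there exist a finite simple graph G = (V,E), a set A of agents with |A| = |V| partitioned into k types, and a bijective placement p₀ : A → V such that no finite sequence of improving swaps of the one-versus-all swap Schelling game (1-k-SSG) with parameter τ starting from p₀ ends in a swap-stable placement; in particular, the 1-k-SSG with k > 2 is not weakly acyclic on arbitrary networks. -/
open Finset
open scoped Classical

noncomputable section

namespace Schelling

variable {V A : Type*} [Fintype V] [Fintype A] {k : ℕ}

/-! ### Transport along an equivalence -/

lemma improving_transport {W V' : Type} [Fintype W] [Fintype V'] (e : W ≃ V')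
    (c : (W → W) → W → ℝ) (c' : (V' → V') → V' → ℝ)
    (hc : ∀ q a, c' q a = c (e.symm ∘ q ∘ e) (e.symm a)) (p q : V' → V') :
    ImprovingSwap c' p q ↔ ImprovingSwap c (e.symm ∘ p ∘ e) (e.symm ∘ q ∘ e) := by
  have key : ∀ a b : V', (q = p ∘ Equiv.swap a b ↔
      e.symm ∘ q ∘ e = (e.symm ∘ p ∘ e) ∘ Equiv.swap (e.symm a) (e.symm b)) := by
    intro a b
    have h1 : ∀ x, e (Equiv.swap (e.symm a) (e.symm b) x) = Equiv.swap a b (e x) := by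
      intro x
      simp only [Equiv.swap_apply_def, Equiv.eq_symm_apply]
      split_ifs <;> simp
    constructor
    · rintro rfl
      funext x
      simp [h1]
    · intro h
      funext y
      have := congrFun h (e.symm y)
      simpa [h1] using this
  constructor
  · rintro ⟨a, b, hab, hq, h1, h2⟩
    refine ⟨e.symm a, e.symm b, by simpa using hab, (key a b).1 hq, ?_, ?_⟩
    · simpa only [hc] using h1
    · simpa only [hc] using h2
  · rintro ⟨a, b, hab, hq, h1, h2⟩
    refine ⟨e a, e b, by simpa using hab, (key _ _).2 (by simpa using hq), ?_, ?_⟩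
    · simpa only [hc, Equiv.symm_apply_apply] using h1
    · simpa only [hc, Equiv.symm_apply_apply] using h2

lemma cost_transport {W V' : Type} [Fintype W] [Fintype V'] (e : W ≃ V') (G : SimpleGraph W)
    (t : W → Fin k) (τ : ℝ) (q : V' → V') (a : V') :
    costAll (G.comap e.symm) (t ∘ e.symm) τ q a =
      costAll G t τ (e.symm ∘ q ∘ e) (e.symm a) := by
  have h1 : posCount (G.comap e.symm) (t ∘ e.symm) q a =
      posCount G t (e.symm ∘ q ∘ e) (e.symm a) := by
    unfold posCount
    refine Finset.card_equiv e.symm ?_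
    intro i; simp
  have h2 : negCountAll (G.comap e.symm) (t ∘ e.symm) q a =
      negCountAll G t (e.symm ∘ q ∘ e) (e.symm a) := by
    unfold negCountAll
    refine Finset.card_equiv e.symm ?_
    intro i; simp
  have h3 : nbrs (G.comap e.symm) q a = ∅ ↔ nbrs G (e.symm ∘ q ∘ e) (e.symm a) = ∅ := by
    unfold nbrs
    rw [← Finset.card_eq_zero, ← Finset.card_eq_zero]
    rw [Finset.card_equiv e.symm]
    intro i; simp
  unfold costAll
  rw [h1, h2]
  simp only [h3]

lemma no_reach {W : Type} (c : (W → W) → W → ℝ) (p₀ : W → W) (I : (W → W) → Prop)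
    (h0 : I p₀) (h1 : ∀ p q, I p → ImprovingSwap c p q → I q)
    (h2 : ∀ p, I p → ∃ q, ImprovingSwap c p q) : ¬ ReachesStableSwap c p₀ := by
  rintro ⟨n, q, hq0, hs, hst⟩
  have : ∀ i ≤ n, I (q i) := by
    intro i
    induction i with
    | zero => intro _; rw [hq0]; exact h0
    | succ i ih => intro hi; exact h1 _ _ (ih (by omega)) (hs i (by omega))
  obtain ⟨r, hr⟩ := h2 _ (this n le_rfl)
  exact hst r hr

/-! ### The construction -/

abbrev SV := Fin 3 × Bool

abbrev WV (m K : ℕ) := SV ⊕ (Fin (m + 3) × Fin K)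

def nu (s : SV) : SV := if s.2 then (s.1 + 1, false) else (s.1 + 2, true)

lemma nu_nu (s : SV) : nu (nu s) = s := by
  obtain ⟨j, b⟩ := s
  fin_cases j <;> cases b <;> rfl

lemma nu_ne (s : SV) : nu s ≠ s := by
  obtain ⟨j, b⟩ := s
  cases b <;> simp [nu]

def wB (s : SV) : ℕ := if s.2 then 4 else 1

def Dg (D : ℕ) (s : SV) : ℕ := (if s.2 then 3 else 1) * (D * 3 ^ s.1.val)

def wt (m D : ℕ) (s : SV) (i : Fin (m + 3)) : ℕ :=
  if i.val < 2 then wB s else if i.val = 2 then Dg D s - 2 * wB s - 1 else 0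

def ty (m : ℕ) (s : SV) : Fin (m + 3) := if s.2 then ⟨1, by omega⟩ else ⟨0, by omega⟩

lemma ty_eq (m : ℕ) (s s' : SV) : ty m s = ty m s' ↔ s.2 = s'.2 := by
  obtain ⟨j, b⟩ := s
  obtain ⟨j', b'⟩ := s'
  cases b <;> cases b' <;> simp [ty]

lemma wt_ty (m D : ℕ) (s s' : SV) : wt m D s (ty m s') = wB s := by
  obtain ⟨j', b'⟩ := s'
  cases b' <;> simp [wt, ty]

lemma Dg_ge (D : ℕ) (hD : 3 ≤ D) (s : SV) : 2 * wB s + 1 ≤ Dg D s := by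
  obtain ⟨j, b⟩ := s
  have : 1 ≤ 3 ^ j.val := Nat.one_le_pow _ _ (by norm_num)
  have : 3 ≤ D * 3 ^ j.val := by nlinarith
  cases b <;> simp [wB, Dg] <;> omega

lemma Dg_le (D : ℕ) (s : SV) : Dg D s ≤ 27 * D := by
  obtain ⟨j, b⟩ := s
  fin_cases j <;> cases b <;> simp [Dg] <;> omega

lemma wt_sum (m D : ℕ) (hD : 3 ≤ D) (s : SV) : ∑ i, wt m D s i + 1 = Dg D s := by
  have := Dg_ge D hD s
  rw [Fin.sum_univ_succ, Fin.sum_univ_succ, Fin.sum_univ_succ]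
  have h : ∀ i : Fin m, wt m D s i.succ.succ.succ = 0 := by
    intro i
    simp [wt]
  have h0 : wt m D s 0 = wB s := by simp [wt]
  have h1 : wt m D s (Fin.succ 0) = wB s := by simp [wt]
  have h2 : wt m D s (Fin.succ (Fin.succ 0)) = Dg D s - 2 * wB s - 1 := by
    have hv : (Fin.succ (Fin.succ 0) : Fin (m + 3)).val = 2 := rfl
    unfold wt
    rw [hv]
    simp
  simp only [h, h0, h1, h2, Finset.sum_const_zero]
  omega

lemma wt_le (m D : ℕ) (hD : 3 ≤ D) (s : SV) (i) : wt m D s i ≤ 27 * D := by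
  have h1 := Dg_ge D hD s
  have h2 := Dg_le D s
  unfold wt
  split_ifs <;> omega

def adjW (m K D : ℕ) : WV m K → WV m K → Prop
  | .inl s, .inl s' => s' = nu s
  | .inl s, .inr f => f.2.val < wt m D s f.1
  | .inr f, .inl s => f.2.val < wt m D s f.1
  | .inr f, .inr g => f.1 = g.1 ∧ f.2 ≠ g.2

def GW (m K D : ℕ) : SimpleGraph (WV m K) where
  Adj := adjW m K D
  symm := ⟨by
    rintro (s | f) (s' | g) h
    · simp only [adjW] at h ⊢
      rw [h, nu_nu]
    · exact h
    · exact h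
    · exact ⟨h.1.symm, h.2.symm⟩⟩
  loopless := ⟨by
    rintro (s | f) h
    · exact nu_ne s h.symm
    · exact h.2 rfl⟩

def tW (m K : ℕ) : WV m K → Fin (m + 3)
  | .inl s => ty m s
  | .inr f => f.1

lemma card_lt (K n : ℕ) (h : n ≤ K) : ∑ y : Fin K, (if y.val < n then 1 else 0) = n := by
  rw [← Finset.card_filter]
  have := Fin.card_filter_val_lt (n := K) (m := n)
  simp_all

def plc (m K : ℕ) (σ : Equiv.Perm SV) : WV m K → WV m K := Sum.map σ id

lemma adj_ll (m K D : ℕ) (σ : Equiv.Perm SV) (s s' : SV) :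
    (GW m K D).Adj (plc m K σ (.inl s)) (plc m K σ (.inl s')) ↔ σ s' = nu (σ s) := Iff.rfl

lemma adj_lr (m K D : ℕ) (σ : Equiv.Perm SV) (s : SV) (f) :
    (GW m K D).Adj (plc m K σ (.inl s)) (plc m K σ (.inr f)) ↔
      f.2.val < wt m D (σ s) f.1 := Iff.rfl

lemma adj_rr (m K D : ℕ) (σ : Equiv.Perm SV) (f g) :
    (GW m K D).Adj (plc m K σ (.inr f)) (plc m K σ (.inr g)) ↔
      f.1 = g.1 ∧ f.2 ≠ g.2 := Iff.rfl

lemma tW_l (m K : ℕ) (s) : tW m K (.inl s) = ty m s := rfl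

lemma tW_r (m K : ℕ) (f) : tW m K (.inr f) = f.1 := rfl

lemma pos_special (m K D : ℕ) (hD : 3 ≤ D) (hK : 27 * D ≤ K) (σ : Equiv.Perm SV) (s : SV) :
    posCount (GW m K D) (tW m K) (plc m K σ) (.inl s) =
      wB (σ s) + if (σ.symm (nu (σ s))).2 = s.2 then 1 else 0 := by
  unfold posCount
  rw [Finset.card_filter, Fintype.sum_sum_type, add_comm]
  simp only [adj_ll, adj_lr, tW_l, tW_r, ty_eq]
  congr 1
  · rw [Fintype.sum_prod_type, Finset.sum_eq_single (ty m s)]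
    · simp only [and_true]
      rw [wt_ty]
      refine card_lt K _ ?_
      have := wt_le m D hD (σ s) (ty m s)
      rw [wt_ty] at this
      omega
    · intro i _ hi
      simp [hi]
    · simp
  · rw [Finset.sum_eq_single (σ.symm (nu (σ s)))]
    · simp
    · intro b _ hb
      have : ¬ (σ b = nu (σ s)) := by
        intro h; apply hb; rw [← h]; simp
      simp [this]
    · simp

lemma deg_special (m K D : ℕ) (hD : 3 ≤ D) (hK : 27 * D ≤ K) (σ : Equiv.Perm SV) (s : SV) :
    (nbrs (GW m K D) (plc m K σ) (.inl s)).card = Dg D (σ s) := by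
  unfold nbrs
  rw [Finset.card_filter, Fintype.sum_sum_type, add_comm,
    ← wt_sum m D hD]
  simp only [adj_ll, adj_lr]
  congr 1
  · rw [Fintype.sum_prod_type]
    refine Finset.sum_congr rfl ?_
    intro i _
    refine card_lt K _ ((wt_le m D hD _ _).trans hK)
  · rw [Finset.sum_eq_single (σ.symm (nu (σ s)))]
    · simp
    · intro b _ hb
      have : ¬ (σ b = nu (σ s)) := by
        intro h; apply hb; rw [← h]; simp
      simp [this]
    · simp

lemma pos_add_neg {W : Type} [Fintype W] (G : SimpleGraph W) (t : W → Fin k) (p : W → W) (a : W) :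
    posCount G t p a + negCountAll G t p a = (nbrs G p a).card := by
  unfold posCount negCountAll nbrs
  rw [← Finset.card_filter_add_card_filter_not (s := Finset.univ.filter fun b => G.Adj (p a) (p b))
    (fun b => t b = t a), Finset.filter_filter, Finset.filter_filter]

/-- utility of a special agent -/
def ut (D : ℕ) (σ : Equiv.Perm SV) (s : SV) : ℝ :=
  ((wB (σ s) : ℝ) + if (σ.symm (nu (σ s))).2 = s.2 then 1 else 0) / (Dg D (σ s) : ℝ)

lemma cost_special (m K D : ℕ) (hD : 3 ≤ D) (hK : 27 * D ≤ K) (τ : ℝ)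
    (σ : Equiv.Perm SV) (s : SV) :
    costAll (GW m K D) (tW m K) τ (plc m K σ) (.inl s) = max 0 (τ - ut D σ s) := by
  have hd := deg_special m K D hD hK σ s
  have hn : nbrs (GW m K D) (plc m K σ) (.inl s) ≠ ∅ := by
    rw [← Finset.card_ne_zero.trans Finset.nonempty_iff_ne_empty, hd]
    have := Dg_ge D hD (σ s)
    omega
  have h := pos_add_neg (GW m K D) (tW m K) (plc m K σ) (.inl s)
  unfold costAll
  rw [if_neg hn, ← Nat.cast_add, h, hd, pos_special m K D hD hK, ut]
  push_cast
  rfl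

lemma cost_nonneg {W : Type} [Fintype W] (G : SimpleGraph W) (t : W → Fin k) (τ : ℝ)
    (hτ : 0 < τ) (p : W → W) (a : W) : 0 ≤ costAll G t τ p a := by
  unfold costAll
  split_ifs
  · exact hτ.le
  · exact le_max_left _ _

lemma cost_fixed (m K D : ℕ) (τ : ℝ) (hτ0 : 0 < τ) (hτ1 : τ < 1) (hK2 : 2 ≤ K)
    (hK : 6 ≤ ((K : ℝ) - 1) * (1 - τ)) (σ : Equiv.Perm SV) (f : Fin (m + 3) × Fin K) :
    costAll (GW m K D) (tW m K) τ (plc m K σ) (.inr f) = 0 := by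
  have hpos : K - 1 ≤ posCount (GW m K D) (tW m K) (plc m K σ) (.inr f) := by
    unfold posCount
    have : ((Finset.univ.erase f.2).image (fun y => (Sum.inr (f.1, y) : WV m K))).card = K - 1 := by
      rw [Finset.card_image_of_injective _ (by intro a b h; simpa using h)]
      simp
    rw [← this]
    apply Finset.card_le_card
    intro b hb
    simp only [Finset.mem_image, Finset.mem_erase, Finset.mem_univ, and_true] at hb
    obtain ⟨y, hy, rfl⟩ := hb
    rw [Finset.mem_filter, adj_rr, tW_r, tW_r]
    exact ⟨Finset.mem_univ _, ⟨rfl, hy.symm⟩, rfl⟩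
  have hneg : negCountAll (GW m K D) (tW m K) (plc m K σ) (.inr f) ≤ 6 := by
    unfold negCountAll
    have : ((Finset.univ : Finset SV).image (fun y => (Sum.inl y : WV m K))).card = 6 := by
      rw [Finset.card_image_of_injective _ (by intro a b h; simpa using h)]
      simp
    rw [← this]
    apply Finset.card_le_card
    rintro (s | g) hb
    · simp
    · exfalso
      rw [Finset.mem_filter, adj_rr, tW_r, tW_r] at hb
      exact hb.2.2 hb.2.1.1.symm
  have h := pos_add_neg (GW m K D) (tW m K) (plc m K σ) (.inr f)
  have hn : nbrs (GW m K D) (plc m K σ) (.inr f) ≠ ∅ := by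
    rw [← Finset.card_ne_zero.trans Finset.nonempty_iff_ne_empty]
    omega
  unfold costAll
  rw [if_neg hn]
  have hp : (K : ℝ) - 1 ≤ posCount (GW m K D) (tW m K) (plc m K σ) (.inr f) := by
    have : (K : ℝ) ≤ ((posCount (GW m K D) (tW m K) (plc m K σ) (.inr f) + 1 : ℕ) : ℝ) := by
      exact_mod_cast (by omega)
    push_cast at this
    linarith
  have hn' : (negCountAll (GW m K D) (tW m K) (plc m K σ) (.inr f) : ℝ) ≤ 6 := by
    exact_mod_cast hneg
  have hn0 : (0 : ℝ) ≤ negCountAll (GW m K D) (tW m K) (plc m K σ) (.inr f) := Nat.cast_nonneg _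
  have hK1 : (2 : ℝ) ≤ K := by exact_mod_cast hK2
  generalize (posCount (GW m K D) (tW m K) (plc m K σ) (.inr f) : ℝ) = P at *
  generalize (negCountAll (GW m K D) (tW m K) (plc m K σ) (.inr f) : ℝ) = Q at *
  apply max_eq_left
  rw [sub_nonpos, le_div_iff₀ (by linarith)]
  nlinarith

/-- the placement permutation given by three bits -/
def sg (x : Fin 3 → Bool) : Equiv.Perm SV where
  toFun s := (s.1, xor s.2 (x s.1))
  invFun s := (s.1, xor s.2 (x s.1))
  left_inv s := by simp
  right_inv s := by simp

lemma ut_le (D : ℕ) (hD : 3 ≤ D) (σ : Equiv.Perm SV) (s : SV) :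
    ut D σ s ≤ 2 / (D * 3 ^ (σ s).1.val) := by
  have hD' : (3 : ℝ) ≤ D := by exact_mod_cast hD
  have hX : (0 : ℝ) < D * 3 ^ (σ s).1.val := by positivity
  have : (if (σ.symm (nu (σ s))).2 = s.2 then (1 : ℝ) else 0) ≤ 1 := by split_ifs <;> norm_num
  unfold ut Dg wB
  generalize (if (σ.symm (nu (σ s))).2 = s.2 then (1 : ℝ) else 0) = δ at *
  split_ifs
  · push_cast
    rw [div_le_div_iff₀ (by positivity) hX]
    nlinarith
  · push_cast
    rw [one_mul]
    gcongr
    linarith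

lemma ut_ge (D : ℕ) (hD : 3 ≤ D) (σ : Equiv.Perm SV) (s : SV) :
    1 / (D * 3 ^ (σ s).1.val) ≤ ut D σ s := by
  have hD' : (3 : ℝ) ≤ D := by exact_mod_cast hD
  have hX : (0 : ℝ) < D * 3 ^ (σ s).1.val := by positivity
  have : 0 ≤ (if (σ.symm (nu (σ s))).2 = s.2 then (1 : ℝ) else 0) := by split_ifs <;> norm_num
  unfold ut Dg wB
  generalize (if (σ.symm (nu (σ s))).2 = s.2 then (1 : ℝ) else 0) = δ at *
  split_ifs
  · push_cast
    rw [div_le_div_iff₀ hX (by positivity)]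
    nlinarith
  · push_cast
    rw [one_mul]
    gcongr
    linarith

lemma ut_lt_tau (D : ℕ) (hD : 3 ≤ D) (τ : ℝ) (hτ : 2 < τ * D) (σ : Equiv.Perm SV) (s : SV) :
    ut D σ s < τ := by
  have hD' : (3 : ℝ) ≤ D := by exact_mod_cast hD
  refine (ut_le D hD σ s).trans_lt ?_
  rw [div_lt_iff₀ (by positivity)]
  have : (1 : ℝ) ≤ 3 ^ (σ s).1.val := one_le_pow₀ (by norm_num)
  nlinarith

lemma cost_lt_iff (m K D : ℕ) (hD : 3 ≤ D) (hK : 27 * D ≤ K) (τ : ℝ) (hτ : 2 < τ * D)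
    (σ σ' : Equiv.Perm SV) (s : SV) :
    costAll (GW m K D) (tW m K) τ (plc m K σ) (.inl s) <
      costAll (GW m K D) (tW m K) τ (plc m K σ') (.inl s) ↔ ut D σ' s < ut D σ s := by
  rw [cost_special m K D hD hK, cost_special m K D hD hK,
    max_eq_right (by linarith [ut_lt_tau D hD τ hτ σ s]),
    max_eq_right (by linarith [ut_lt_tau D hD τ hτ σ' s])]
  constructor <;> intro h <;> linarith

lemma ut_cross (D : ℕ) (hD : 3 ≤ D) (σ σ' : Equiv.Perm SV) (s : SV)
    (h : (σ' s).1 < (σ s).1) : ut D σ s < ut D σ' s := by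
  have hD' : (3 : ℝ) ≤ D := by exact_mod_cast hD
  refine (ut_le D hD σ s).trans_lt (lt_of_lt_of_le ?_ (ut_ge D hD σ' s))
  have h3 : (3 : ℝ) ^ ((σ' s).1.val + 1) ≤ 3 ^ (σ s).1.val := 
    pow_le_pow_right₀ (by norm_num) h
  have hp : (0 : ℝ) < 3 ^ (σ' s).1.val := by positivity
  rw [pow_succ] at h3
  rw [div_lt_div_iff₀ (by positivity) (by positivity)]
  nlinarith

lemma plc_swap (m K : ℕ) [DecidableEq (WV m K)] (σ : Equiv.Perm SV) (s s' : SV) :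
    plc m K σ ∘ Equiv.swap (Sum.inl s : WV m K) (Sum.inl s') =
      plc m K (σ * Equiv.swap s s') := by
  funext b
  rcases b with b | f
  · simp only [plc, Function.comp, Equiv.swap_apply_def, Sum.inl.injEq, Sum.map_inl,
      Equiv.Perm.mul_apply]
    split_ifs <;> simp
  · rw [Function.comp, Equiv.swap_apply_of_ne_of_ne (by simp) (by simp)]
    rfl

lemma sg_swap (x : Fin 3 → Bool) (j : Fin 3) (b : Bool) :
    sg x * Equiv.swap (j, b) (j, !b) = sg (Function.update x j (!(x j))) := by
  ext1 ⟨l, c⟩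
  simp only [Equiv.Perm.mul_apply, Equiv.swap_apply_def, sg, Equiv.coe_fn_mk, Function.update_apply,
    Prod.mk.injEq]
  by_cases h : l = j
  · subst h
    cases b <;> cases c <;> simp
  · simp [h]

/-- The unsatisfied pairs admit an improving swap. -/
lemma ut_flip (D : ℕ) (hD : 3 ≤ D) (x : Fin 3 → Bool) (j : Fin 3) (h : x j = x (j + 2))
    (b : Bool) : ut D (sg x) (j, b) < ut D (sg (Function.update x j (!(x j)))) (j, b) := by
  have hD' : (3 : ℝ) ≤ D := by exact_mod_cast hD
  have hX : (0 : ℝ) < D * 3 ^ j.val := by positivity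
  have h1 : j + 2 ≠ j := by clear hX h; revert j; decide
  have h2 : j + 1 ≠ j := by clear hX h h1; revert j; decide
  have hu : ∀ (y : Fin 3 → Bool) (c : Bool), xor c (y j) = false →
      ut D (sg y) (j, c) = (1 + if (!(y (j + 2))) = c then 1 else 0) / (D * 3 ^ j.val) := by
    intro y c hc
    have hv : sg y (j, c) = (j, false) := by simp [sg, hc]
    unfold ut
    rw [hv]
    simp [nu, sg, wB, Dg]
  have hv : ∀ (y : Fin 3 → Bool) (c : Bool), xor c (y j) = true →
      ut D (sg y) (j, c) = (4 + if y (j + 1) = c then 1 else 0) / (3 * (D * 3 ^ j.val)) := by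
    intro y c hc
    have hv : sg y (j, c) = (j, true) := by simp [sg, hc]
    unfold ut
    rw [hv]
    simp [nu, sg, wB, Dg]
  have hd : (0 : ℝ) ≤ (if x (j + 1) = b then 1 else 0) ∧
      (if x (j + 1) = b then (1 : ℝ) else 0) ≤ 1 := by split_ifs <;> norm_num
  rcases hb : xor b (x j) with _ | _
  · rw [hu x b hb, hv _ b (by rw [Function.update_self]; revert hb; cases b <;> cases x j <;> simp),
      Function.update_of_ne h2, if_neg (by rw [← h]; revert hb; cases b <;> cases x j <;> simp),
      div_lt_div_iff₀ (by positivity) (by positivity)]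
    nlinarith
  · rw [hv x b hb, hu _ b (by rw [Function.update_self]; revert hb; cases b <;> cases x j <;> simp),
      Function.update_of_ne h1, if_pos (c := (!(x (j + 2))) = b) (by rw [← h]; revert hb; cases b <;> cases x j <;> simp),
      div_lt_div_iff₀ (by positivity) (by positivity)]
    nlinarith

lemma exists_unsat (x : Fin 3 → Bool) : ∃ j, x j = x (j + 2) := by
  revert x; decide

lemma main_W (m K D : ℕ) (τ : ℝ) (hτ0 : 0 < τ) (hτ1 : τ < 1) (hD : 3 ≤ D) (hτ : 2 < τ * D)
    (hK : 27 * D ≤ K) (hK' : 6 ≤ ((K : ℝ) - 1) * (1 - τ)) :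
    ¬ ReachesStableSwap (costAll (GW m K D) (tW m K) τ) id := by
  refine no_reach _ _ (fun p => ∃ x, p = plc m K (sg x)) ?_ ?_ ?_
  · refine ⟨fun _ => false, ?_⟩
    funext b
    rcases b with b | f <;> simp [plc, sg]
  · rintro _ q ⟨x, rfl⟩ ⟨a, b, hab, rfl, ha, hb⟩
    have hfix := cost_fixed m K D τ hτ0 hτ1 (by omega) hK' (sg x)
    rcases a with s | f
    swap
    · rw [hfix] at ha
      exact absurd ha (not_lt.2 (cost_nonneg _ _ _ hτ0 _ _))
    rcases b with s' | f
    swap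
    · rw [hfix] at hb
      exact absurd hb (not_lt.2 (cost_nonneg _ _ _ hτ0 _ _))
    rw [plc_swap] at ha hb ⊢
    rw [cost_lt_iff m K D hD hK τ hτ] at ha hb
    have e1 : (sg x * Equiv.swap s s') s = sg x s' := by simp
    have e2 : (sg x * Equiv.swap s s') s' = sg x s := by simp
    have hs : s.1 = s'.1 := by
      rcases lt_trichotomy s.1 s'.1 with h | h | h
      · exact absurd ha (not_lt.2 (ut_cross D hD _ _ s (by rw [e1]; exact h)).le)
      · exact h
      · exact absurd hb (not_lt.2 (ut_cross D hD _ _ s' (by rw [e2]; exact h)).le)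
    obtain ⟨j, c⟩ := s
    obtain ⟨j', c'⟩ := s'
    obtain rfl : j = j' := hs
    have hc : c' = !c := by
      cases c <;> cases c' <;> simp_all
    subst hc
    exact ⟨_, by rw [sg_swap]⟩
  · rintro _ ⟨x, rfl⟩
    obtain ⟨j, hj⟩ := exists_unsat x
    refine ⟨_, .inl (j, false), .inl (j, true), by simp, rfl, ?_, ?_⟩
    all_goals
      rw [plc_swap, cost_lt_iff m K D hD hK τ hτ]
      have := sg_swap x j false
      rw [Bool.not_false] at this
      rw [this]
      exact ut_flip D hD x j hj _

/-- For every `k ≥ 3` and every `τ ∈ (0,1)` there are a graph, `k` surjectively used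
agent types on `|A| = |V|` agents and a bijective placement `p₀` from which no finite
sequence of improving swaps of the `1`-`k`-SSG reaches a swap-stable placement, i.e.,
the `1`-`k`-SSG with `k > 2` is not weakly acyclic on arbitrary networks. -/
theorem statement2 (k : ℕ) (hk : 3 ≤ k) (τ : ℝ) (hτ0 : 0 < τ) (hτ1 : τ < 1) :
    ∃ (N : ℕ) (G : SimpleGraph (Fin N)) (t : Fin N → Fin k) (p₀ : Fin N → Fin N),
      Function.Surjective t ∧ Function.Bijective p₀ ∧
      ¬ ReachesStableSwap (costAll G t τ) p₀ := by
  obtain ⟨m, rfl⟩ := Nat.exists_eq_add_of_le' hk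
  obtain ⟨D₀, hD₀⟩ := exists_nat_gt (2 / τ)
  obtain ⟨M, hM⟩ := exists_nat_gt (6 / (1 - τ))
  have h1τ : 0 < 1 - τ := by linarith
  rw [div_lt_iff₀ hτ0] at hD₀
  rw [div_lt_iff₀ h1τ] at hM
  have hτ : 2 < τ * ((D₀ + 3 : ℕ) : ℝ) := by push_cast; nlinarith
  have hK' : 6 ≤ (((27 * (D₀ + 3) + M + 1 : ℕ) : ℝ) - 1) * (1 - τ) := by
    push_cast
    have : (0 : ℝ) ≤ D₀ := Nat.cast_nonneg _
    nlinarith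
  have key := main_W m (27 * (D₀ + 3) + M + 1) (D₀ + 3) τ hτ0 hτ1 (by omega) hτ (by omega) hK'
  set K := 27 * (D₀ + 3) + M + 1 with hKdef
  let e := Fintype.equivFin (WV m K)
  have hc := cost_transport e (GW m K (D₀ + 3)) (tW m K) τ
  refine ⟨_, (GW m K (D₀ + 3)).comap e.symm, tW m K ∘ e.symm, id, ?_, Function.bijective_id, ?_⟩
  · intro i
    exact ⟨e (.inr (i, ⟨0, by omega⟩)), by simp [tW]⟩
  · rintro ⟨n, q, hq0, hs, hst⟩
    apply key
    have himp := improving_transport e _ _ hc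
    refine ⟨n, fun i => e.symm ∘ q i ∘ e, ?_, ?_, ?_⟩
    · funext y; simp [hq0]
    · intro i hi
      exact (himp _ _).1 (hs i hi)
    · intro r hr
      apply hst (e ∘ r ∘ e.symm)
      rw [himp]
      convert hr using 1
      funext y; simp

end Schelling
end
end

section
/- Let G = (V,E) be a Δ-regular finite simple graph, let τ ∈ (0,1) with τ ≤ 1/Δ, and consider the one-versus-one swap Schelling game (1-1-SSG) with bijective placements and any number of types. Then along any sequence of improving swaps each agent participates in at most one swap (any agent who has performed an improving swap is content afterwards and remains content); consequently every sequence of improving swaps has length at most |A|, where A is the set of agents, and improving response dynamics always reach a swap-stable placement in O(|A|) moves. -/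
open Finset
open scoped Classical

noncomputable section

namespace Schelling

variable {V A : Type*} [Fintype V] [Fintype A] {k : ℕ}

lemma aux_nbrs_card (G : SimpleGraph V) (Δ : ℕ) (hreg : IsRegular G Δ)
    (p : A → V) (hp : Function.Bijective p) (a : A) : (nbrs G p a).card = Δ := by
  rw [← hreg (p a)]
  unfold nbrs
  refine Finset.card_bij (fun b _ => p b) ?_ ?_ ?_
  · intro b hb
    simpa using hb
  · intro b _ c _ h
    exact hp.1 h
  · intro v hv
    obtain ⟨b, rfl⟩ := hp.2 v
    exact ⟨b, by simpa using hv, rfl⟩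

lemma aux_sum_le (G : SimpleGraph V) (Δ : ℕ) (hreg : IsRegular G Δ) (t : A → Fin k)
    (p : A → V) (hp : Function.Bijective p) (a : A) :
    posCount G t p a + negCountOne G t p a ≤ Δ := by
  have h1 : posCount G t p a ≤ Δ := by
    rw [← aux_nbrs_card G Δ hreg p hp a]
    refine Finset.card_le_card ?_
    intro b hb
    simp only [nbrs, Finset.mem_filter, Finset.mem_univ, true_and] at hb ⊢
    exact hb.1
  have h2 : negCountOne G t p a ≤ Δ - posCount G t p a := by
    unfold negCountOne
    refine Finset.sup_le ?_
    intro T hT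
    have hT' : T ≠ t a := by simpa using hT
    refine Nat.le_sub_of_add_le ?_
    rw [← aux_nbrs_card G Δ hreg p hp a]
    unfold posCount
    rw [← Finset.card_union_of_disjoint]
    · refine Finset.card_le_card ?_
      intro b hb
      simp only [nbrs, Finset.mem_union, Finset.mem_filter, Finset.mem_univ, true_and] at hb ⊢
      rcases hb with hb | hb <;> exact hb.1
    · rw [Finset.disjoint_left]
      intro b hb hc
      simp only [Finset.mem_filter, Finset.mem_univ, true_and] at hb hc
      exact hT' (hb.2.symm.trans hc.2)
  omega

/-- An agent has a neighbor of its own type. -/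
def Good (G : SimpleGraph V) (t : A → Fin k) (p : A → V) (a : A) : Prop :=
  ∃ b, G.Adj (p a) (p b) ∧ t b = t a

lemma aux_cost (G : SimpleGraph V) (Δ : ℕ) (hreg : IsRegular G Δ) (t : A → Fin k)
    (τ : ℝ) (hτ0 : 0 < τ) (hτΔ : τ ≤ 1 / (Δ : ℝ))
    (p : A → V) (hp : Function.Bijective p) (a : A) :
    costOne G t τ p a = if Good G t p a then 0 else τ := by
  have hΔ : 0 < Δ := by
    rcases Nat.eq_zero_or_pos Δ with h | h
    · subst h
      simp at hτΔ
      linarith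
    · exact h
  have hn : nbrs G p a ≠ ∅ := by
    rw [← Finset.card_pos.trans Finset.nonempty_iff_ne_empty, aux_nbrs_card G Δ hreg p hp a]
    exact hΔ
  unfold costOne
  rw [if_neg hn]
  split_ifs with h
  · have hpos : 1 ≤ posCount G t p a := by
      obtain ⟨b, hb⟩ := h
      exact Finset.card_pos.2 ⟨b, by simpa using hb⟩
    have hs := aux_sum_le G Δ hreg t p hp a
    have hpos' : (1 : ℝ) ≤ posCount G t p a := by exact_mod_cast hpos
    have hs' : (posCount G t p a : ℝ) + negCountOne G t p a ≤ Δ := by exact_mod_cast hs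
    have hneg : (0 : ℝ) ≤ negCountOne G t p a := Nat.cast_nonneg _
    apply max_eq_left
    have : 1 / (Δ : ℝ) ≤ (posCount G t p a : ℝ) /
        ((posCount G t p a : ℝ) + (negCountOne G t p a : ℝ)) :=
      div_le_div₀ (by linarith) hpos' (by linarith) hs'
    linarith
  · have h0 : posCount G t p a = 0 := by
      unfold posCount
      rw [Finset.card_eq_zero, Finset.filter_eq_empty_iff]
      intro b _ hb
      exact h ⟨b, hb⟩
    rw [h0]
    simp [hτ0.le]

lemma aux_swap (G : SimpleGraph V) (Δ : ℕ) (hreg : IsRegular G Δ) (t : A → Fin k)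
    (τ : ℝ) (hτ0 : 0 < τ) (hτΔ : τ ≤ 1 / (Δ : ℝ))
    (p q : A → V) (hp : Function.Bijective p) (a b : A)
    (h : SwapMove (costOne G t τ) p q a b) :
    Function.Bijective q ∧ (¬ Good G t p a ∧ ¬ Good G t p b) ∧
      (Good G t q a ∧ Good G t q b) ∧ ∀ x, Good G t p x → Good G t q x := by
  obtain ⟨hab, hq, ha, hb⟩ := h
  have hqb : Function.Bijective q := by
    rw [hq]
    exact hp.comp (Equiv.bijective _)
  rw [aux_cost G Δ hreg t τ hτ0 hτΔ q hqb, aux_cost G Δ hreg t τ hτ0 hτΔ p hp] at ha hb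
  have key : ∀ x, (if Good G t q x then 0 else τ) < (if Good G t p x then 0 else τ) →
      ¬ Good G t p x ∧ Good G t q x := by
    intro x hx
    split_ifs at hx with h1 h2 h2
    · exact absurd hx (lt_irrefl _)
    · exact ⟨h2, h1⟩
    · linarith
    · exact absurd hx (lt_irrefl _)
  have ka := key a ha
  have kb := key b hb
  refine ⟨hqb, ⟨ka.1, kb.1⟩, ⟨ka.2, kb.2⟩, ?_⟩
  have fix : ∀ x, Good G t p x → q x = p x := by
    intro x hx
    have h1 : x ≠ a := fun e => ka.1 (e ▸ hx)
    have h2 : x ≠ b := fun e => kb.1 (e ▸ hx)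
    rw [hq, Function.comp_apply, Equiv.swap_apply_of_ne_of_ne h1 h2]
  intro x hx
  obtain ⟨c, hc, hct⟩ := id hx
  have hgc : Good G t p c := ⟨x, hc.symm, hct.symm⟩
  refine ⟨c, ?_, hct⟩
  rw [fix x hx, fix c hgc]
  exact hc

/-- The number of agents with a neighbor of their own type. -/
def goodCount (G : SimpleGraph V) (t : A → Fin k) (p : A → V) : ℕ :=
  (Finset.univ.filter fun a => Good G t p a).card

lemma aux_count (G : SimpleGraph V) (Δ : ℕ) (hreg : IsRegular G Δ) (t : A → Fin k)
    (τ : ℝ) (hτ0 : 0 < τ) (hτΔ : τ ≤ 1 / (Δ : ℝ))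
    (p q : A → V) (hp : Function.Bijective p) (a b : A)
    (h : SwapMove (costOne G t τ) p q a b) :
    goodCount G t p < goodCount G t q := by
  obtain ⟨_, h1, h2, h3⟩ := aux_swap G Δ hreg t τ hτ0 hτΔ p q hp a b h
  refine Finset.card_lt_card (Finset.ssubset_iff_of_subset ?_ |>.2 ⟨a, ?_, ?_⟩)
  · intro x hx
    simp only [Finset.mem_filter, Finset.mem_univ, true_and] at hx ⊢
    exact h3 x hx
  · simpa using h2.1
  · simpa using h1.1

lemma aux_reach (G : SimpleGraph V) (Δ : ℕ) (hreg : IsRegular G Δ) (t : A → Fin k)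
    (τ : ℝ) (hτ0 : 0 < τ) (hτΔ : τ ≤ 1 / (Δ : ℝ)) (m : ℕ) :
    ∀ p : A → V, Function.Bijective p → Fintype.card A ≤ goodCount G t p + m →
      ReachesStableSwap (costOne G t τ) p := by
  induction m with
  | zero =>
    intro p hp hm
    refine ⟨0, fun _ => p, rfl, by simp, ?_⟩
    rintro q ⟨a, b, h⟩
    have h1 := aux_count G Δ hreg t τ hτ0 hτΔ p q hp a b h
    have h2 : goodCount G t q ≤ Fintype.card A := Finset.card_le_univ _
    omega
  | succ m ih =>
    intro p hp hm
    by_cases hs : SwapStable (costOne G t τ) p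
    · exact ⟨0, fun _ => p, rfl, by simp, hs⟩
    · unfold SwapStable at hs
      push Not at hs
      obtain ⟨q, a, b, h⟩ := hs
      have h1 := aux_count G Δ hreg t τ hτ0 hτΔ p q hp a b h
      have h2 := (aux_swap G Δ hreg t τ hτ0 hτΔ p q hp a b h).1
      obtain ⟨n, s, hs0, hsn, hst⟩ := ih q h2 (by omega)
      refine ⟨n + 1, fun i => Nat.casesOn i p s, rfl, ?_, hst⟩
      intro i hi
      cases i with
      | zero =>
        change ImprovingSwap _ p (s 0)
        rw [hs0]
        exact ⟨a, b, h⟩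
      | succ i => exact hsn i (by omega)

/-- In the `1`-`1`-SSG on a `Δ`-regular graph with `τ ≤ 1/Δ`: along any sequence of
improving swaps, each swapping agent is content in every later placement, each agent
participates in at most one swap, hence every such sequence has length at most `|A|`,
and IRD always reach a swap-stable placement. -/
theorem statement3 {V A : Type*} [Fintype V] [Fintype A] {k : ℕ}
    (G : SimpleGraph V) (Δ : ℕ) (hreg : IsRegular G Δ)
    (t : A → Fin k) (ht : Function.Surjective t)
    (hcard : Fintype.card A = Fintype.card V)
    (τ : ℝ) (hτ0 : 0 < τ) (hτ1 : τ < 1) (hτΔ : τ ≤ 1 / (Δ : ℝ)) :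
    (∀ (n : ℕ) (seq : ℕ → A → V) (mv : ℕ → A × A),
        Function.Bijective (seq 0) →
        (∀ i < n, SwapMove (costOne G t τ) (seq i) (seq (i + 1)) (mv i).1 (mv i).2) →
        (∀ i, i < n → ∀ j, i < j → j ≤ n →
            costOne G t τ (seq j) (mv i).1 = 0 ∧ costOne G t τ (seq j) (mv i).2 = 0) ∧
        (∀ i j, i < j → j < n → ∀ a, (a = (mv i).1 ∨ a = (mv i).2) →
            a ≠ (mv j).1 ∧ a ≠ (mv j).2) ∧
        n ≤ Fintype.card A) ∧
    (∀ p₀ : A → V, Function.Bijective p₀ → ReachesStableSwap (costOne G t τ) p₀) := by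
  refine ⟨?_, fun p hp => aux_reach G Δ hreg t τ hτ0 hτΔ (Fintype.card A) p hp (by omega)⟩
  intro n seq mv h0 hmv
  have hbij : ∀ i, i ≤ n → Function.Bijective (seq i) := by
    intro i
    induction i with
    | zero => intro _; exact h0
    | succ i ih =>
      intro hi
      exact (aux_swap G Δ hreg t τ hτ0 hτΔ _ _ (ih (by omega)) _ _ (hmv i (by omega))).1
  have hsw := fun i (hi : i < n) =>
    aux_swap G Δ hreg t τ hτ0 hτΔ _ _ (hbij i hi.le) _ _ (hmv i hi)
  have hgood : ∀ i, i < n → ∀ j, i < j → j ≤ n →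
      Good G t (seq j) (mv i).1 ∧ Good G t (seq j) (mv i).2 := by
    intro i hi j hij
    induction j, hij using Nat.le_induction with
    | base => intro _; exact (hsw i hi).2.2.1
    | succ j hj ih =>
      intro hjn
      have h1 := ih (by omega)
      have h2 := (hsw j (by omega)).2.2.2
      exact ⟨h2 _ h1.1, h2 _ h1.2⟩
  refine ⟨?_, ?_, ?_⟩
  · intro i hi j hij hj
    have h := hgood i hi j hij hj
    rw [aux_cost G Δ hreg t τ hτ0 hτΔ _ (hbij j hj), aux_cost G Δ hreg t τ hτ0 hτΔ _ (hbij j hj),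
      if_pos h.1, if_pos h.2]
    exact ⟨rfl, rfl⟩
  · intro i j hij hj a ha
    have h := hgood i (by omega) j hij hj.le
    have hg : Good G t (seq j) a := by
      rcases ha with rfl | rfl
      · exact h.1
      · exact h.2
    have h2 := (hsw j hj).2.1
    exact ⟨fun e => h2.1 (e ▸ hg), fun e => h2.2 (e ▸ hg)⟩
  · have hc : ∀ i, i ≤ n → i ≤ goodCount G t (seq i) := by
      intro i
      induction i with
      | zero => intro _; exact Nat.zero_le _
      | succ i ih =>
        intro hi
        have h1 := ih (by omega)
        have h2 := aux_count G Δ hreg t τ hτ0 hτΔ _ _ (hbij i (by omega)) _ _ (hmv i (by omega))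
        omega
    exact (hc n le_rfl).trans (Finset.card_le_univ _)

end Schelling
end
end

section
/- Let G = (V,E) be a Δ-regular finite simple graph, let τ ∈ (0,1) with τ ≤ 1/Δ, let A be a set of agents with |A| < |V| partitioned into any number of types, and consider the one-versus-one jump Schelling game (1-1-JSG). Then along any sequence of improving jumps each agent jumps at most once (any agent who has performed an improving jump is content afterwards and remains content); consequently every sequence of improving jumps has length at most |A| and improving response dynamics always reach a jump-stable placement in O(|A|) moves. -/
open Finset
open scoped Classical

noncomputable section

namespace Schelling

variable {V A : Type*} [Fintype V] [Fintype A] {k : ℕ}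

theorem pos_add_neg_le {V A : Type*} [Fintype V] [Fintype A] {k : ℕ}
    (G : SimpleGraph V) (Δ : ℕ) (hreg : IsRegular G Δ) (t : A → Fin k)
    (p : A → V) (hp : Function.Injective p) (a : A) :
    posCount G t p a + negCountOne G t p a ≤ Δ := by
  have h1 : (nbrs G p a).card ≤ Δ := by
    rw [← hreg (p a)]
    apply Finset.card_le_card_of_injOn p
    · intro b hb
      simpa [nbrs] using hb
    · exact hp.injOn
  have h2 : posCount G t p a ≤ (nbrs G p a).card := by
    apply Finset.card_le_card
    intro b hb
    simp [nbrs] at hb ⊢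
    exact hb.1
  suffices h : negCountOne G t p a ≤ (nbrs G p a).card - posCount G t p a by omega
  unfold negCountOne
  apply Finset.sup_le
  intro T hT
  have hT' : T ≠ t a := by simpa using hT
  have hd : Disjoint (Finset.univ.filter fun b => G.Adj (p a) (p b) ∧ t b = T)
      (Finset.univ.filter fun b => G.Adj (p a) (p b) ∧ t b = t a) := by
    rw [Finset.disjoint_left]
    intro b hb hb'
    simp at hb hb'
    exact hT' (hb.2.symm.trans hb'.2)
  have := Finset.card_union_of_disjoint hd
  have h3 : ((Finset.univ.filter fun b => G.Adj (p a) (p b) ∧ t b = T) ∪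
      (Finset.univ.filter fun b => G.Adj (p a) (p b) ∧ t b = t a)).card
      ≤ (nbrs G p a).card := by
    apply Finset.card_le_card
    intro b hb
    simp [nbrs] at hb ⊢
    tauto
  unfold posCount
  omega

theorem cost_of_friend {V A : Type*} [Fintype V] [Fintype A] {k : ℕ}
    (G : SimpleGraph V) (Δ : ℕ) (hreg : IsRegular G Δ) (t : A → Fin k)
    (τ : ℝ) (hτΔ : τ ≤ 1 / (Δ : ℝ))
    (p : A → V) (hp : Function.Injective p) (a b : A)
    (hab : G.Adj (p a) (p b)) (htb : t b = t a) : costOne G t τ p a = 0 := by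
  have hn : nbrs G p a ≠ ∅ := by
    apply Finset.Nonempty.ne_empty
    exact ⟨b, by simp [nbrs, hab]⟩
  have hpos : 1 ≤ posCount G t p a :=
    Finset.card_pos.mpr ⟨b, by simp [hab, htb]⟩
  have hle := pos_add_neg_le G Δ hreg t p hp a
  unfold costOne
  rw [if_neg hn]
  apply max_eq_left
  have hpos' : (1 : ℝ) ≤ posCount G t p a := by exact_mod_cast hpos
  have hle' : (posCount G t p a : ℝ) + negCountOne G t p a ≤ Δ := by exact_mod_cast hle
  have hneg : (0 : ℝ) ≤ negCountOne G t p a := by positivity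
  have : 1 / (Δ : ℝ) ≤ (posCount G t p a : ℝ) /
      ((posCount G t p a : ℝ) + (negCountOne G t p a : ℝ)) := by
    apply div_le_div₀ <;> linarith
  linarith

theorem cost_of_no_friend {V A : Type*} [Fintype V] [Fintype A] {k : ℕ}
    (G : SimpleGraph V) (t : A → Fin k) (τ : ℝ) (hτ0 : 0 < τ) (p : A → V) (a : A)
    (h : ¬ ∃ b, G.Adj (p a) (p b) ∧ t b = t a) : costOne G t τ p a = τ := by
  have h0 : posCount G t p a = 0 := by
    unfold posCount
    rw [Finset.card_eq_zero, Finset.filter_eq_empty_iff]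
    intro b _ hb
    exact h ⟨b, hb⟩
  unfold costOne
  split_ifs
  · rfl
  · simp [h0, hτ0.le]

theorem jump_step {V A : Type*} [Fintype V] [Fintype A] {k : ℕ}
    (G : SimpleGraph V) (Δ : ℕ) (hreg : IsRegular G Δ) (t : A → Fin k)
    (τ : ℝ) (hτ0 : 0 < τ) (hτΔ : τ ≤ 1 / (Δ : ℝ))
    (p q : A → V) (hp : Function.Injective p) (a : A) (v : V)
    (hj : JumpMove (costOne G t τ) p q a v) :
    Function.Injective q ∧ costOne G t τ p a ≠ 0 ∧ costOne G t τ q a = 0 ∧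
      ∀ x, costOne G t τ p x = 0 → costOne G t τ q x = 0 := by
  obtain ⟨hv, hq, hc⟩ := hj
  have hqi : Function.Injective q := by
    intro x y hxy
    rw [hq] at hxy
    by_cases hx : x = a <;> by_cases hy : y = a
    · rw [hx, hy]
    · subst hx
      rw [Function.update_self, Function.update_of_ne hy] at hxy
      exact absurd hxy.symm (hv y)
    · subst hy
      rw [Function.update_self, Function.update_of_ne hx] at hxy
      exact absurd hxy (hv x)
    · rw [Function.update_of_ne hx, Function.update_of_ne hy] at hxy
      exact hp hxy
  have dich : ∀ r : A → V, Function.Injective r → ∀ x, costOne G t τ r x = 0 ∨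
      costOne G t τ r x = τ := by
    intro r hr x
    by_cases h : ∃ b, G.Adj (r x) (r b) ∧ t b = t x
    · obtain ⟨b, h1, h2⟩ := h
      exact Or.inl (cost_of_friend G Δ hreg t τ hτΔ r hr x b h1 h2)
    · exact Or.inr (cost_of_no_friend G t τ hτ0 r x h)
  have hpa : costOne G t τ p a ≠ 0 := by
    intro h
    rcases dich q hqi a with h' | h' <;> linarith
  refine ⟨hqi, hpa, ?_, ?_⟩
  · rcases dich q hqi a with h' | h'
    · exact h'
    · rcases dich p hp a with h | h <;> linarith
  · intro x hx
    have hxa : x ≠ a := by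
      rintro rfl
      exact hpa hx
    by_cases h : ∃ b, G.Adj (p x) (p b) ∧ t b = t x
    · obtain ⟨b, h1, h2⟩ := h
      have hba : b ≠ a := by
        rintro rfl
        exact hpa (cost_of_friend G Δ hreg t τ hτΔ p hp b x h1.symm h2.symm)
      apply cost_of_friend G Δ hreg t τ hτΔ q hqi x b _ h2
      rw [hq, Function.update_of_ne hxa, Function.update_of_ne hba]
      exact h1
    · have := cost_of_no_friend G t τ hτ0 p x h
      linarith

theorem reaches_aux {V A : Type*} [Fintype V] [Fintype A] {k : ℕ}
    (G : SimpleGraph V) (Δ : ℕ) (hreg : IsRegular G Δ) (t : A → Fin k)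
    (τ : ℝ) (hτ0 : 0 < τ) (hτΔ : τ ≤ 1 / (Δ : ℝ)) (m : ℕ) :
    ∀ p : A → V, Function.Injective p →
      (Finset.univ.filter fun a => costOne G t τ p a ≠ 0).card ≤ m →
      ReachesStableJump (costOne G t τ) p := by
  induction m with
  | zero =>
    intro p hp hm
    refine ⟨0, fun _ => p, rfl, by simp, ?_⟩
    rintro q ⟨a, v, hj⟩
    have := (jump_step G Δ hreg t τ hτ0 hτΔ p q hp a v hj).2.1
    have h0 := Finset.card_eq_zero.mp (Nat.le_zero.mp hm)
    rw [Finset.filter_eq_empty_iff] at h0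
    exact h0 (Finset.mem_univ a) this
  | succ m ih =>
    intro p hp hm
    by_cases hs : JumpStable (costOne G t τ) p
    · exact ⟨0, fun _ => p, rfl, by simp, hs⟩
    · unfold JumpStable at hs
      push Not at hs
      obtain ⟨q, hq⟩ := hs
      obtain ⟨a, v, hj⟩ := id hq
      obtain ⟨hqi, h1, h2, h3⟩ := jump_step G Δ hreg t τ hτ0 hτΔ p q hp a v hj
      have hlt : (Finset.univ.filter fun a => costOne G t τ q a ≠ 0).card <
          (Finset.univ.filter fun a => costOne G t τ p a ≠ 0).card := by
        apply Finset.card_lt_card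
        rw [Finset.ssubset_iff_of_subset]
        · exact ⟨a, by simp [h1], by simp [h2]⟩
        · intro x hx
          simp only [Finset.mem_filter, Finset.mem_univ, true_and] at hx ⊢
          exact fun h => hx (h3 x h)
      obtain ⟨n, r, hr0, hr1, hr2⟩ := ih q hqi (by omega)
      refine ⟨n + 1, fun i => Nat.casesOn i p r, rfl, ?_, hr2⟩
      intro i hi
      cases i with
      | zero =>
        show ImprovingJump _ p (r 0)
        rw [hr0]
        exact hq
      | succ i => exact hr1 i (by omega)

/-- In the `1`-`1`-JSG on a `Δ`-regular graph with `τ ≤ 1/Δ`: along any sequence of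
improving jumps, each jumping agent is content in every later placement, each agent jumps
at most once, hence every such sequence has length at most `|A|`, and IRD always reach a
jump-stable placement. -/
theorem statement9 {V A : Type*} [Fintype V] [Fintype A] {k : ℕ}
    (G : SimpleGraph V) (Δ : ℕ) (hreg : IsRegular G Δ)
    (t : A → Fin k) (ht : Function.Surjective t)
    (hcard : Fintype.card A < Fintype.card V)
    (τ : ℝ) (hτ0 : 0 < τ) (hτ1 : τ < 1) (hτΔ : τ ≤ 1 / (Δ : ℝ)) :
    (∀ (n : ℕ) (seq : ℕ → A → V) (mv : ℕ → A × V),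
        Function.Injective (seq 0) →
        (∀ i < n, JumpMove (costOne G t τ) (seq i) (seq (i + 1)) (mv i).1 (mv i).2) →
        (∀ i, i < n → ∀ j, i < j → j ≤ n → costOne G t τ (seq j) (mv i).1 = 0) ∧
        (∀ i j, i < j → j < n → (mv i).1 ≠ (mv j).1) ∧
        n ≤ Fintype.card A) ∧
    (∀ p₀ : A → V, Function.Injective p₀ → ReachesStableJump (costOne G t τ) p₀) := by
  refine ⟨?_, fun p₀ hp => reaches_aux G Δ hreg t τ hτ0 hτΔ _ p₀ hp le_rfl⟩
  intro n seq mv h0 hmv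
  have hinj : ∀ i, i ≤ n → Function.Injective (seq i) := by
    intro i
    induction i with
    | zero => exact fun _ => h0
    | succ i ih =>
      intro hi
      exact (jump_step G Δ hreg t τ hτ0 hτΔ _ _ (ih (by omega)) _ _ (hmv i (by omega))).1
  have hstep := fun i (hi : i < n) =>
    jump_step G Δ hreg t τ hτ0 hτΔ _ _ (hinj i hi.le) _ _ (hmv i hi)
  have hA : ∀ i, i < n → ∀ j, i < j → j ≤ n → costOne G t τ (seq j) (mv i).1 = 0 := by
    intro i hi j hij
    induction j, hij using Nat.le_induction with
    | base => exact fun _ => (hstep i hi).2.2.1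
    | succ j hij ih => exact fun hj => (hstep j (by omega)).2.2.2 _ (ih (by omega))
  have hB : ∀ i j, i < j → j < n → (mv i).1 ≠ (mv j).1 := by
    intro i j hij hj h
    have := hA i (by omega) j hij hj.le
    rw [h] at this
    exact (hstep j hj).2.1 this
  refine ⟨hA, hB, ?_⟩
  have hf : Function.Injective (fun i : Fin n => (mv i).1) := by
    intro i j hij
    rcases lt_trichotomy i j with h | h | h
    · exact absurd hij (hB i j h j.2)
    · exact h
    · exact absurd hij.symm (hB j i h i.2)
  simpa using Fintype.card_le_of_injective _ hf

end Schelling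
end
end
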